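/- Let k ≥ 5 and let n be an integer with n ≥ (k − 1)(k − 3). Then the integral symplectic group Sp(2n, ℤ) contains an element of order exactly k. -/

import Mathlib

/-!
The group `GL l R` acts on the Lagrangian `R^l` and contragrediently on the complementary one, which
embeds it into `Sp (l ⊕ l) R` as block diagonal matrices. Permutation matrices therefore embed the
symmetric group on `l` into the symplectic group, and a cycle of length `k ≤ |l|` has order `k`.
-/

open Equiv Function Matrix

section Permutations

theorem orderOf_finRotate {k : ℕ} (hk : k ≠ 0) : orderOf (finRotate k) = k := by
  obtain rfl | hk_two : k = 1 ∨ 2 ≤ k := by omega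
  · exact orderOf_eq_one_iff.mpr finRotate_one
  · rw [(isCycle_finRotate_of_le hk_two).orderOf, support_finRotate_of_le hk_two,
      Finset.card_univ, Fintype.card_fin]

theorem exists_perm_orderOf_eq {α : Type*} [Fintype α] {k : ℕ} (hk : k ≠ 0)
    (hkα : k ≤ Fintype.card α) : ∃ σ : Perm α, orderOf σ = k := by
  obtain ⟨ι⟩ : Nonempty (Fin k ↪ α) := Embedding.nonempty_of_card_le (by simpa using hkα)
  refine ⟨Perm.viaEmbeddingHom ι (finRotate k), ?_⟩
  rw [orderOf_injective _ (Perm.viaEmbeddingHom_injective ι), orderOf_finRotate hk]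

end Permutations

section Embeddings

variable (l R : Type*) [Fintype l] [DecidableEq l] [CommRing R]

/-- The permutation representation of the symmetric group on `l` over `R`, valued in `GL l R`. -/
def permToGL : Perm l →* GL l R :=
  permMatrixHom.toHomUnits

theorem permToGL_injective [Nontrivial R] : Injective (permToGL l R) := by
  intro σ τ h
  have permMatrix_inv_eq : σ⁻¹.permMatrix R = τ⁻¹.permMatrix R := congrArg Units.val h
  have toPEquiv_inv_eq : σ⁻¹.toPEquiv = τ⁻¹.toPEquiv :=
    PEquiv.toMatrix_injective permMatrix_inv_eq
  refine inv_injective (Equiv.ext fun i ↦ Option.some_injective _ ?_)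
  exact DFunLike.congr_fun toPEquiv_inv_eq i

/-- The embedding `A ↦ diag(A, (A⁻¹)ᵀ)` of the general linear group into the symplectic group. Its
image is the Levi subgroup stabilizing the two standard complementary Lagrangians. -/
def glToSymplectic : GL l R →* symplecticGroup l R where
  toFun A := ⟨fromBlocks A 0 0 (↑A⁻¹ : Matrix l l R)ᵀ, by
    rw [SymplecticGroup.fromBlocks_mem_iff]
    simp [← transpose_mul, -coe_units_inv]⟩
  map_one' := by simp
  map_mul' A B := by
    ext1
    simp [fromBlocks_multiply, -coe_units_inv]

theorem glToSymplectic_injective : Injective (glToSymplectic l R) := by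
  intro A B h
  exact Units.ext (fromBlocks_inj.mp (congrArg Subtype.val h)).1

end Embeddings

theorem symplectic_group_has_element_of_order_k_stable_range_general
    {l : Type*} [Fintype l] [DecidableEq l] (R : Type*) [CommRing R] [Nontrivial R]
    {k : ℕ} (hk : k ≠ 0) (hkl : k ≤ Fintype.card l) :
    ∃ M : symplecticGroup l R, orderOf M = k := by
  obtain ⟨σ, hσ⟩ := exists_perm_orderOf_eq hk hkl
  refine ⟨glToSymplectic l R (permToGL l R σ), ?_⟩
  rw [orderOf_injective _ (glToSymplectic_injective l R),
    orderOf_injective _ (permToGL_injective l R), hσ]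

theorem le_sub_one_mul_sub_three {k : ℕ} (hk : 5 ≤ k) : k ≤ (k - 1) * (k - 3) := calc
  k ≤ (k - 1) * 2 := by omega
  _ ≤ (k - 1) * (k - 3) := Nat.mul_le_mul_left _ (by omega)

/-- For `k ≥ 5` and `n ≥ (k - 1)(k - 3)`, the integral symplectic group
`Sp(2n, ℤ)` contains an element of order exactly `k`. -/
theorem symplectic_group_has_element_of_order_k_stable_range
    (k n : ℕ) (hk : 5 ≤ k) (hn : (k - 1) * (k - 3) ≤ n) :
    ∃ M : Matrix.symplecticGroup (Fin n) ℤ, orderOf M = k := by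
  exact symplectic_group_has_element_of_order_k_stable_range_general ℤ (by omega)
    (by simpa using (le_sub_one_mul_sub_three hk).trans hn)
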